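/- Let ψ be an n-qubit stabilizer state with independent generating set s_1, g_2, …, g_n of 𝒮(ψ) such that Z_1 anticommutes with s_1 and commutes with each g_i (i ≥ 2), and let ψ_+ and ψ_− be unit vectors satisfying Pψ_+ = ψ_+ for every P in the group generated by {Z_1, g_2,…,g_n} and Pψ_− = ψ_− for every P in the group generated by {−Z_1, g_2,…,g_n}. Then |⟨ψ_+, ψ⟩|² = |⟨ψ_−, ψ⟩|² = 1/2, and ψ = ⟨ψ_+, ψ⟩·ψ_+ + ⟨ψ_−, ψ⟩·ψ_−; i.e., ψ is an equal-weight superposition of the two stabilizer states ψ_±. -/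

import Mathlib

noncomputable section
namespace PaperFormal

open Matrix

/-- The space of `n`-qubit operators: matrices indexed by computational basis states. -/
abbrev QMat (n : ℕ) := Matrix (Fin n → Fin 2) (Fin n → Fin 2) ℂ

/-- The space of `n`-qubit state vectors. -/
abbrev QVec (n : ℕ) := (Fin n → Fin 2) → ℂ

def σI : Matrix (Fin 2) (Fin 2) ℂ := 1
def σX : Matrix (Fin 2) (Fin 2) ℂ := !![0, 1; 1, 0]
def σY : Matrix (Fin 2) (Fin 2) ℂ := !![0, -Complex.I; Complex.I, 0]
def σZ : Matrix (Fin 2) (Fin 2) ℂ := !![1, 0; 0, -1]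

def IsPauliFactor (m : Matrix (Fin 2) (Fin 2) ℂ) : Prop :=
  m = σI ∨ m = σX ∨ m = σY ∨ m = σZ

/-- Kronecker product over `n` qubits of single-qubit matrices. -/
def kron {n : ℕ} (σ : Fin n → Matrix (Fin 2) (Fin 2) ℂ) : QMat n :=
  fun v w => ∏ j, σ j (v j) (w j)

/-- Membership in the `n`-qubit Pauli group `𝒫_n`:
`M = i^k σ_1 ⊗ ⋯ ⊗ σ_n` with each `σ_j ∈ {I, X, Y, Z}`. -/
def IsPauli {n : ℕ} (M : QMat n) : Prop :=
  ∃ (k : Fin 4) (σ : Fin n → Matrix (Fin 2) (Fin 2) ℂ),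
    (∀ j, IsPauliFactor (σ j)) ∧ M = Complex.I ^ (k : ℕ) • kron σ

/-- A Pauli operator supported on the set `A` of qubits (identity factors outside `A`). -/
def PauliSupportedOn {n : ℕ} (M : QMat n) (A : Set (Fin n)) : Prop :=
  ∃ (k : Fin 4) (σ : Fin n → Matrix (Fin 2) (Fin 2) ℂ),
    (∀ j, IsPauliFactor (σ j)) ∧ (∀ j, j ∉ A → σ j = σI) ∧
    M = Complex.I ^ (k : ℕ) • kron σ

/-- The Pauli `M` has identity (`j`-th Kronecker factor proportional to identity) at qubit `j`. -/
def PauliTrivialAt {n : ℕ} (M : QMat n) (j : Fin n) : Prop :=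
  PauliSupportedOn M {i | i ≠ j}

/-- The single-qubit operator `m` placed at qubit `j` (identity elsewhere). -/
def opAt {n : ℕ} (j : Fin n) (m : Matrix (Fin 2) (Fin 2) ℂ) : QMat n :=
  kron (fun i => if i = j then m else σI)

/-- Inner product `⟨φ, ψ⟩` (antilinear in the first argument). -/
def innerC {n : ℕ} (φ ψ : QVec n) : ℂ := ∑ v, (starRingEnd ℂ) (φ v) * ψ v

/-- Squared norm `‖ψ‖²`. -/
def nrmSq {n : ℕ} (ψ : QVec n) : ℝ := ∑ v, Complex.normSq (ψ v)

/-- The stabilizer group `𝒮(ψ) = {P ∈ 𝒫_n : Pψ = ψ}`. -/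
def stabGroup {n : ℕ} (ψ : QVec n) : Set (QMat n) :=
  {P | IsPauli P ∧ P.mulVec ψ = ψ}

/-- An `n`-qubit pure stabilizer state: a unit vector whose stabilizer group has `2^n` elements. -/
def IsStabState {n : ℕ} (ψ : QVec n) : Prop :=
  nrmSq ψ = 1 ∧ (stabGroup ψ).ncard = 2 ^ n

/-- The product `∏ i, g i ^ α i` (in the fixed order of indices). -/
def prodPow {n m : ℕ} (g : Fin m → QMat n) (α : Fin m → ZMod 2) : QMat n :=
  (List.ofFn fun i => g i ^ (α i).val).prod

/-- `g` is an independent generating set of `𝒮(ψ)`: the map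
`(α_i) ↦ ∏ g_i^{α_i}` is a bijection from `(ℤ/2)^m` onto `𝒮(ψ)`. -/
def IsIndepGenSet {n m : ℕ} (ψ : QVec n) (g : Fin m → QMat n) : Prop :=
  (∀ i, g i ∈ stabGroup ψ) ∧ Function.Injective (prodPow g) ∧
    Set.range (prodPow g) = stabGroup ψ

/-- The `T` gate `diag(1, e^{iπ/4})`. -/
def Tgate : Matrix (Fin 2) (Fin 2) ℂ :=
  !![1, 0; 0, Complex.exp (Real.pi * Complex.I / 4)]

/-! Averaging the stabilizer group over its `2 ^ n` elements projects onto the vectors it fixes. All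
its elements except `1` are traceless, so this projection has trace one, and a vector fixed by all
generators is a multiple of `ψ`. If `φ` is a unit vector fixed by `Z` and by the generators other
than `s`, then `φ + s φ` is such a vector. Since `s` anticommutes with `Z`, the vector `s φ` lies in
the `-1`-eigenspace of `Z`, hence is orthogonal to `φ`, and `ψ = ⟨φ, ψ⟩ (φ + s φ)`. As `s` is
unitary and fixes `ψ`, pairing with `ψ` gives `2 |⟨φ, ψ⟩|² = 1`, and applying `1 + Z` gives
`2 ⟨φ, ψ⟩ φ = ψ + Z ψ`. Adding these identities for `Z` and `-Z` yields the superposition. -/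

theorem range_eq_insert_setOf_ne {α β : Type*} (f : α → β) (a : α) :
    Set.range f = insert (f a) {b | ∃ i, i ≠ a ∧ b = f i} := by
  rw [← Set.insert_image_compl_eq_range f a]
  congr 1 with b
  simp [eq_comm]

theorem commute_of_mul_self_eq_one {M : Type*} [Monoid M] {a b : M} (ha : a * a = 1)
    (hb : b * b = 1) (hab : a * b * (a * b) = 1) : Commute a b :=
  calc
    a * b = a * (a * b * (a * b)) * b := by rw [hab, mul_one]
    _ = a * a * (b * a) * (b * b) := by simp only [mul_assoc]
    _ = b * a := by rw [ha, hb, one_mul, mul_one]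

section FixedVectors

variable {ι R : Type*} [Fintype ι] [DecidableEq ι]

/-- The submonoid of square matrices fixing the vector `v`. -/
def vecStabilizer [Semiring R] (v : ι → R) : Submonoid (Matrix ι ι R) where
  carrier := {M | M *ᵥ v = v}
  one_mem' := one_mulVec v
  mul_mem' {A B} (hA : A *ᵥ v = v) (hB : B *ᵥ v = v) := by
    rw [Set.mem_ofPred_eq, ← mulVec_mulVec, hB, hA]

theorem mem_vecStabilizer [Semiring R] {v : ι → R} {M : Matrix ι ι R} :
    M ∈ vecStabilizer v ↔ M *ᵥ v = v :=
  Iff.rfl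

theorem eq_of_eq_smul_of_mem_vecStabilizer [CommRing R] [IsDomain R] {v : ι → R} (hv : v ≠ 0)
    {A B : Matrix ι ι R} {c : R} (hAB : A = c • B) (hA : A ∈ vecStabilizer v)
    (hB : B ∈ vecStabilizer v) : A = B := by
  rw [mem_vecStabilizer] at hA hB
  have hcv : c • v = (1 : R) • v := by rw [one_smul, ← hB, ← smul_mulVec, ← hAB, hA, hB]
  rw [hAB, smul_left_injective R hv hcv, one_smul]

end FixedVectors

theorem mulVec_mulVec_eq_neg_of_anticommute {ι R : Type*} [Fintype ι] [Ring R]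
    {S Z : Matrix ι ι R} {v : ι → R} (hanti : Z * S = -(S * Z)) (hv : Z *ᵥ v = v) :
    Z *ᵥ S *ᵥ v = -(S *ᵥ v) := by
  rw [mulVec_mulVec, hanti, neg_mulVec, ← mulVec_mulVec, hv]

section DotProduct

variable {ι R : Type*} [Fintype ι] [CommRing R] [StarRing R] {S Z : Matrix ι ι R} {φ χ ψ : ι → R}

theorem star_dotProduct_eq_zero_of_isHermitian [NoZeroDivisors R] [NeZero (2 : R)]
    (hZ : Z.IsHermitian) (hφ : Z *ᵥ φ = φ) (hχ : Z *ᵥ χ = -χ) : star φ ⬝ᵥ χ = 0 := by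
  have h : star φ ⬝ᵥ χ = -(star φ ⬝ᵥ χ) :=
    calc
      star φ ⬝ᵥ χ = star (Z *ᵥ φ) ⬝ᵥ χ := by rw [hφ]
      _ = star φ ⬝ᵥ Z *ᵥ χ := by rw [star_mulVec, hZ.eq, dotProduct_mulVec]
      _ = -(star φ ⬝ᵥ χ) := by rw [hχ, dotProduct_neg]
  have h2 : 2 * (star φ ⬝ᵥ χ) = 0 := by linear_combination h
  exact (mul_eq_zero.mp h2).resolve_left two_ne_zero

theorem star_mulVec_dotProduct_mulVec [DecidableEq ι] (hS : S ∈ unitaryGroup ι R) :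
    star (S *ᵥ φ) ⬝ᵥ S *ᵥ ψ = star φ ⬝ᵥ ψ := by
  rw [star_mulVec, ← dotProduct_mulVec, mulVec_mulVec, ← star_eq_conjTranspose,
    mem_unitaryGroup_iff'.mp hS, one_mulVec]

theorem eq_star_dotProduct_smul_add {c : R} (hc : c • ψ = φ + χ) (hφ : star φ ⬝ᵥ φ = 1)
    (hχ : star φ ⬝ᵥ χ = 0) : ψ = (star φ ⬝ᵥ ψ) • (φ + χ) := by
  have h : (star φ ⬝ᵥ ψ) * c = 1 := by
    rw [mul_comm, ← smul_eq_mul, ← dotProduct_smul, hc, dotProduct_add, hφ, hχ, add_zero]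
  rw [← hc, smul_smul, h, one_smul]

theorem two_mul_star_dotProduct_mul_self [DecidableEq ι] (hS : S ∈ unitaryGroup ι R)
    (hSψ : S *ᵥ ψ = ψ) (hψ : star ψ ⬝ᵥ ψ = 1) (h : ψ = (star φ ⬝ᵥ ψ) • (φ + S *ᵥ φ)) :
    2 * (star (star φ ⬝ᵥ ψ) * (star φ ⬝ᵥ ψ)) = 1 := by
  have hSφ : star (S *ᵥ φ) ⬝ᵥ ψ = star φ ⬝ᵥ ψ := by
    conv_lhs => rw [← hSψ, star_mulVec_dotProduct_mulVec hS]
  calc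
    2 * (star (star φ ⬝ᵥ ψ) * (star φ ⬝ᵥ ψ))
      = star ((star φ ⬝ᵥ ψ) • (φ + S *ᵥ φ)) ⬝ᵥ ψ := by
        rw [star_smul, star_add, smul_dotProduct, add_dotProduct, hSφ, smul_eq_mul]
        ring
    _ = 1 := by rw [← h, hψ]

theorem two_mul_star_dotProduct_smul (hφ : Z *ᵥ φ = φ) (hχ : Z *ᵥ χ = -χ)
    (h : ψ = (star φ ⬝ᵥ ψ) • (φ + χ)) : (2 * (star φ ⬝ᵥ ψ)) • φ = ψ + Z *ᵥ ψ := by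
  have hZψ : Z *ᵥ ψ = (star φ ⬝ᵥ ψ) • (φ - χ) := by
    conv_lhs => rw [h, mulVec_smul, mulVec_add, hφ, hχ, ← sub_eq_add_neg]
  linear_combination (norm := module) -h - hZψ

end DotProduct

section Kronecker

variable {n : ℕ}

theorem kron_mul (σ τ : Fin n → Matrix (Fin 2) (Fin 2) ℂ) :
    kron σ * kron τ = kron (fun j => σ j * τ j) := by
  ext v w
  simp only [mul_apply, kron, ← Finset.prod_mul_distrib]
  exact (Fintype.prod_sum fun j k => σ j (v j) k * τ j k (w j)).symm

theorem kron_smul (c : Fin n → ℂ) (σ : Fin n → Matrix (Fin 2) (Fin 2) ℂ) :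
    kron (fun j => c j • σ j) = (∏ j, c j) • kron σ := by
  ext v w
  simp [kron, Finset.prod_mul_distrib]

theorem kron_one : kron (fun _ : Fin n => (1 : Matrix (Fin 2) (Fin 2) ℂ)) = 1 := by
  ext v w
  rcases eq_or_ne v w with rfl | hvw
  · simp [kron]
  · obtain ⟨j, hj⟩ := Function.ne_iff.mp hvw
    rw [one_apply_ne hvw]
    exact Finset.prod_eq_zero (Finset.mem_univ j) (one_apply_ne hj)

theorem conjTranspose_kron (σ : Fin n → Matrix (Fin 2) (Fin 2) ℂ) :
    (kron σ)ᴴ = kron (fun j => (σ j)ᴴ) := by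
  ext v w
  simp [kron]

theorem trace_kron (σ : Fin n → Matrix (Fin 2) (Fin 2) ℂ) :
    (kron σ).trace = ∏ j, (σ j).trace := by
  simp only [trace, kron, diag_apply]
  exact (Fintype.prod_sum fun j k => σ j k k).symm

theorem kron_mem_unitaryGroup {σ : Fin n → Matrix (Fin 2) (Fin 2) ℂ}
    (hσ : ∀ j, σ j ∈ unitaryGroup (Fin 2) ℂ) : kron σ ∈ unitaryGroup (Fin n → Fin 2) ℂ := by
  have hσσ : (fun j => (σ j)ᴴ * σ j) = fun _ => 1 :=
    funext fun j => mem_unitaryGroup_iff'.mp (hσ j)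
  rw [mem_unitaryGroup_iff', star_eq_conjTranspose, conjTranspose_kron, kron_mul, hσσ, kron_one]

theorem isHermitian_opAt (j : Fin n) {m : Matrix (Fin 2) (Fin 2) ℂ} (hm : m.IsHermitian) :
    (opAt j m).IsHermitian := by
  rw [IsHermitian, opAt, conjTranspose_kron]
  congr 1 with i : 1
  split_ifs
  exacts [hm, conjTranspose_one]

end Kronecker

section PauliProducts

theorem σX_mul_σY : σX * σY = Complex.I • σZ := by simp [σX, σY, σZ]

theorem σY_mul_σX : σY * σX = Complex.I ^ 3 • σZ := by simp [σX, σY, σZ, Complex.I_pow_three]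

theorem σY_mul_σZ : σY * σZ = Complex.I • σX := by simp [σX, σY, σZ]

theorem σZ_mul_σY : σZ * σY = Complex.I ^ 3 • σX := by simp [σX, σY, σZ, Complex.I_pow_three]

theorem σZ_mul_σX : σZ * σX = Complex.I • σY := by simp [σX, σY, σZ]

theorem σX_mul_σZ : σX * σZ = Complex.I ^ 3 • σY := by simp [σX, σY, σZ, Complex.I_pow_three]

end PauliProducts

namespace IsPauliFactor

variable {a b : Matrix (Fin 2) (Fin 2) ℂ}

theorem mul_self (ha : IsPauliFactor a) : a * a = 1 := by
  rcases ha with rfl | rfl | rfl | rfl <;> simp [σI, σX, σY, σZ, one_fin_two]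

theorem isHermitian (ha : IsPauliFactor a) : a.IsHermitian := by
  rcases ha with rfl | rfl | rfl | rfl <;> ext i j <;> fin_cases i <;> fin_cases j <;>
    simp [σI, σX, σY, σZ]

theorem mem_unitaryGroup (ha : IsPauliFactor a) : a ∈ unitaryGroup (Fin 2) ℂ := by
  rw [mem_unitaryGroup_iff, star_eq_conjTranspose, ha.isHermitian.eq, ha.mul_self]

theorem trace_eq_zero (ha : IsPauliFactor a) (h : a ≠ σI) : a.trace = 0 := by
  rcases ha with rfl | rfl | rfl | rfl
  · exact absurd rfl h
  all_goals simp [σX, σY, σZ, trace_fin_two]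

theorem exists_mul_eq_smul (ha : IsPauliFactor a) (hb : IsPauliFactor b) :
    ∃ (k : ℕ) (c : Matrix (Fin 2) (Fin 2) ℂ), IsPauliFactor c ∧ a * b = Complex.I ^ k • c := by
  have hI : IsPauliFactor σI := .inl rfl
  have hX : IsPauliFactor σX := .inr (.inl rfl)
  have hY : IsPauliFactor σY := .inr (.inr (.inl rfl))
  have hZ : IsPauliFactor σZ := .inr (.inr (.inr rfl))
  rcases ha with rfl | rfl | rfl | rfl
  · exact ⟨0, b, hb, by simp [σI]⟩
  · rcases hb with rfl | rfl | rfl | rfl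
    · exact ⟨0, σX, hX, by simp [σI]⟩
    · exact ⟨0, σI, hI, by simp [hX.mul_self, σI]⟩
    · exact ⟨1, σZ, hZ, by rw [σX_mul_σY, pow_one]⟩
    · exact ⟨3, σY, hY, σX_mul_σZ⟩
  · rcases hb with rfl | rfl | rfl | rfl
    · exact ⟨0, σY, hY, by simp [σI]⟩
    · exact ⟨3, σZ, hZ, σY_mul_σX⟩
    · exact ⟨0, σI, hI, by simp [hY.mul_self, σI]⟩
    · exact ⟨1, σX, hX, by rw [σY_mul_σZ, pow_one]⟩
  · rcases hb with rfl | rfl | rfl | rfl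
    · exact ⟨0, σZ, hZ, by simp [σI]⟩
    · exact ⟨1, σY, hY, by rw [σZ_mul_σX, pow_one]⟩
    · exact ⟨3, σX, hX, σZ_mul_σY⟩
    · exact ⟨0, σI, hI, by simp [hZ.mul_self, σI]⟩

end IsPauliFactor

theorem finite_setOf_isPauliFactor : {m | IsPauliFactor m}.Finite :=
  Set.toFinite {σI, σX, σY, σZ}

namespace IsPauli

variable {n : ℕ} {P Q : QMat n}

theorem I_pow_smul_kron (k : ℕ) {σ : Fin n → Matrix (Fin 2) (Fin 2) ℂ}
    (hσ : ∀ j, IsPauliFactor (σ j)) : IsPauli (Complex.I ^ k • kron σ) :=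
  ⟨⟨k % 4, Nat.mod_lt _ (by norm_num)⟩, σ, hσ, by rw [Complex.I_pow_eq_pow_mod]⟩

theorem one : IsPauli (1 : QMat n) := by
  have h : IsPauli (Complex.I ^ 0 • kron fun _ : Fin n => σI) := I_pow_smul_kron 0 fun _ => .inl rfl
  rwa [pow_zero, one_smul, σI, kron_one] at h

theorem mul (hP : IsPauli P) (hQ : IsPauli Q) : IsPauli (P * Q) := by
  obtain ⟨k, σ, hσ, rfl⟩ := hP
  obtain ⟨l, τ, hτ, rfl⟩ := hQ
  choose e c hc hmul using fun j => (hσ j).exists_mul_eq_smul (hτ j)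
  rw [smul_mul_smul_comm, kron_mul, funext hmul, kron_smul, Finset.prod_pow_eq_pow_sum, smul_smul,
    ← pow_add, ← pow_add]
  exact I_pow_smul_kron _ hc

theorem exists_mul_self_eq_smul_one (hP : IsPauli P) : ∃ c : ℂ, P * P = c • (1 : QMat n) := by
  obtain ⟨k, σ, hσ, rfl⟩ := hP
  exact ⟨_, by rw [smul_mul_smul_comm, kron_mul, funext fun j => (hσ j).mul_self, kron_one]⟩

theorem mem_unitaryGroup (hP : IsPauli P) : P ∈ unitaryGroup (Fin n → Fin 2) ℂ := by
  obtain ⟨k, σ, hσ, rfl⟩ := hP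
  have hI : Complex.I ∈ unitary ℂ := by simp [Unitary.mem_iff]
  exact Unitary.smul_mem_of_mem (pow_mem hI k)
    (kron_mem_unitaryGroup fun j => (hσ j).mem_unitaryGroup)

theorem trace_eq_zero_or_eq_smul_one (hP : IsPauli P) :
    P.trace = 0 ∨ ∃ c : ℂ, P = c • (1 : QMat n) := by
  obtain ⟨k, σ, hσ, rfl⟩ := hP
  by_cases h : ∀ j, σ j = σI
  · exact .inr ⟨Complex.I ^ (k : ℕ), by rw [funext h, σI, kron_one]⟩
  · obtain ⟨j, hj⟩ := not_forall.mp h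
    left
    rw [trace_smul, trace_kron, Finset.prod_eq_zero (Finset.mem_univ j) ((hσ j).trace_eq_zero hj),
      smul_zero]

end IsPauli

section StabilizerGroup

theorem finite_setOf_isPauli (n : ℕ) : {P : QMat n | IsPauli P}.Finite := by
  have hfactors : {σ : Fin n → Matrix (Fin 2) (Fin 2) ℂ | ∀ j, IsPauliFactor (σ j)}.Finite :=
    Set.Finite.pi' fun _ => finite_setOf_isPauliFactor
  refine (Set.Finite.image2 (fun (k : Fin 4) σ => Complex.I ^ (k : ℕ) • kron σ) Set.finite_univ
    hfactors).subset ?_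
  rintro _ ⟨k, σ, hσ, rfl⟩
  exact Set.mem_image2_of_mem (Set.mem_univ k) hσ

variable {n : ℕ} {ψ : QVec n} {P Q : QMat n}

/-- The stabilizer group `𝒮(ψ)`, as a submonoid of the `n`-qubit operators. -/
def stabSubmonoid (ψ : QVec n) : Submonoid (QMat n) where
  carrier := stabGroup ψ
  one_mem' := ⟨.one, one_mem (vecStabilizer ψ)⟩
  mul_mem' hP hQ := ⟨hP.1.mul hQ.1, (vecStabilizer ψ).mul_mem hP.2 hQ.2⟩

theorem stabSubmonoid_le_vecStabilizer (ψ : QVec n) : stabSubmonoid ψ ≤ vecStabilizer ψ :=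
  fun _ hP => hP.2

theorem mul_self_of_mem_stabSubmonoid (hψ : ψ ≠ 0) (hP : P ∈ stabSubmonoid ψ) : P * P = 1 := by
  obtain ⟨c, hc⟩ := hP.1.exists_mul_self_eq_smul_one
  exact eq_of_eq_smul_of_mem_vecStabilizer hψ hc (mul_mem hP hP).2 (one_mem _)

theorem commute_of_mem_stabSubmonoid (hψ : ψ ≠ 0) (hP : P ∈ stabSubmonoid ψ)
    (hQ : Q ∈ stabSubmonoid ψ) : Commute P Q :=
  commute_of_mul_self_eq_one (mul_self_of_mem_stabSubmonoid hψ hP)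
    (mul_self_of_mem_stabSubmonoid hψ hQ) (mul_self_of_mem_stabSubmonoid hψ (mul_mem hP hQ))

theorem trace_eq_zero_of_mem_stabSubmonoid (hψ : ψ ≠ 0) (hP : P ∈ stabSubmonoid ψ)
    (hP1 : P ≠ 1) : P.trace = 0 :=
  hP.1.trace_eq_zero_or_eq_smul_one.resolve_right fun ⟨_, hc⟩ =>
    hP1 (eq_of_eq_smul_of_mem_vecStabilizer hψ hc hP.2 (one_mem _))

theorem image_val_units_stabSubmonoid (hψ : ψ ≠ 0) :
    Units.val '' ((stabSubmonoid ψ).units : Set (QMat n)ˣ) = stabGroup ψ := by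
  ext P
  refine ⟨fun ⟨u, hu, huP⟩ => huP ▸ hu.1, fun hP => ?_⟩
  have hPP := mul_self_of_mem_stabSubmonoid hψ hP
  exact ⟨⟨P, P, hPP, hPP⟩, ⟨hP, hP⟩, rfl⟩

theorem card_units_stabSubmonoid (hψ : ψ ≠ 0) :
    Nat.card (stabSubmonoid ψ).units = (stabGroup ψ).ncard := by
  rw [← image_val_units_stabSubmonoid hψ, Set.ncard_image_of_injective _ Units.val_injective]
  rfl

instance : Finite (stabSubmonoid ψ).units :=
  ((finite_setOf_isPauli n).preimage Units.val_injective.injOn).subset fun _ hu => hu.1.1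

/-- The action of the stabilizer group of `ψ` on state vectors, with the group encoded as the units
of the submonoid `stabSubmonoid ψ`; for `ψ ≠ 0` these are all of `stabGroup ψ`. -/
def stabRep (ψ : QVec n) : Representation ℂ (stabSubmonoid ψ).units (QVec n) :=
  (toLinAlgEquiv' : QMat n ≃ₐ[ℂ] Module.End ℂ (QVec n)).toMonoidHom.comp
    ((Units.coeHom (QMat n)).comp (stabSubmonoid ψ).units.subtype)

theorem character_stabRep (u : (stabSubmonoid ψ).units) :
    (stabRep ψ).character u = ((u : (QMat n)ˣ) : QMat n).trace :=
  trace_toLin'_eq _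

theorem card_mul_finrank_invariants_stabRep (hψ : ψ ≠ 0) :
    (stabGroup ψ).ncard * Module.finrank ℂ (stabRep ψ).invariants = 2 ^ n := by
  have := Fintype.ofFinite (stabSubmonoid ψ).units
  have hcard : (Nat.card (stabSubmonoid ψ).units : ℂ) ≠ 0 := Nat.cast_ne_zero.mpr Nat.card_pos.ne'
  have := invertibleOfNonzero hcard
  have htrace : ∑ u, (stabRep ψ).character u = 2 ^ n := by
    rw [Finset.sum_eq_single_of_mem 1 (Finset.mem_univ _), character_stabRep]
    · simp
    · intro u _ hu
      rw [character_stabRep]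
      exact trace_eq_zero_of_mem_stabSubmonoid hψ u.2.1 (by simpa using hu)
  have h := (stabRep ψ).card_inv_mul_sum_char_eq_finrank
  rw [htrace, inv_mul_eq_iff_eq_mul₀ hcard, card_units_stabSubmonoid hψ] at h
  exact_mod_cast h.symm

theorem mem_invariants_stabRep {χ : QVec n} (h : stabSubmonoid ψ ≤ vecStabilizer χ) :
    χ ∈ (stabRep ψ).invariants :=
  fun u => h u.2.1

theorem IsIndepGenSet.closure_range {m : ℕ} {g : Fin m → QMat n} (hg : IsIndepGenSet ψ g) :
    Submonoid.closure (Set.range g) = stabSubmonoid ψ := by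
  refine le_antisymm (Submonoid.closure_le.mpr (Set.range_subset_iff.mpr hg.1)) fun P hP => ?_
  obtain ⟨α, rfl⟩ : P ∈ Set.range (prodPow g) := hg.2.2 ▸ hP
  refine list_prod_mem fun Q hQ => ?_
  obtain ⟨i, rfl⟩ := List.mem_ofFn.mp hQ
  exact pow_mem (Submonoid.subset_closure (Set.mem_range_self i)) _

end StabilizerGroup

section StabilizerState

variable {n : ℕ} {φ ψ : QVec n}

theorem innerC_eq_dotProduct (φ ψ : QVec n) : innerC φ ψ = star φ ⬝ᵥ ψ :=
  rfl

theorem star_dotProduct_self_eq_one_iff : star ψ ⬝ᵥ ψ = 1 ↔ nrmSq ψ = 1 := by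
  have h : star ψ ⬝ᵥ ψ = nrmSq ψ := by
    simp [dotProduct, nrmSq, Complex.normSq_eq_conj_mul_self]
  rw [h, Complex.ofReal_eq_one]

namespace IsStabState

theorem ne_zero (hψ : IsStabState ψ) : ψ ≠ 0 := by
  rintro rfl
  simpa [nrmSq] using hψ.1

theorem finrank_invariants_stabRep (hψ : IsStabState ψ) :
    Module.finrank ℂ (stabRep ψ).invariants = 1 := by
  have h := card_mul_finrank_invariants_stabRep hψ.ne_zero
  rwa [hψ.2, Nat.mul_eq_left (by positivity)] at h

theorem exists_smul_eq (hψ : IsStabState ψ) {χ : QVec n}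
    (hχ : stabSubmonoid ψ ≤ vecStabilizer χ) : ∃ c : ℂ, c • ψ = χ := by
  let ψ' : (stabRep ψ).invariants := ⟨ψ, mem_invariants_stabRep (stabSubmonoid_le_vecStabilizer ψ)⟩
  have hψ' : ψ' ≠ 0 := fun h => hψ.ne_zero (congrArg Subtype.val h)
  obtain ⟨c, hc⟩ := (finrank_eq_one_iff_of_nonzero' ψ' hψ').mp hψ.finrank_invariants_stabRep
    ⟨χ, mem_invariants_stabRep hχ⟩
  exact ⟨c, congrArg Subtype.val hc⟩

variable {s Z : QMat n} {T : Set (QMat n)}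

theorem exists_smul_eq_add_mulVec (hψ : IsStabState ψ)
    (hgen : Submonoid.closure (insert s T) = stabSubmonoid ψ) (hT : ∀ P ∈ T, P *ᵥ φ = φ) :
    ∃ c : ℂ, c • ψ = φ + s *ᵥ φ := by
  have hmem : ∀ P ∈ insert s T, P ∈ stabSubmonoid ψ := fun P hP =>
    hgen ▸ Submonoid.subset_closure hP
  have hs := hmem s (Set.mem_insert s T)
  refine hψ.exists_smul_eq (hgen ▸ Submonoid.closure_le.mpr ?_)
  rintro P (rfl | hP) <;>
    rw [SetLike.mem_coe, mem_vecStabilizer, mulVec_add, mulVec_mulVec]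
  · rw [mul_self_of_mem_stabSubmonoid hψ.ne_zero hs, one_mulVec, add_comm]
  · rw [commute_of_mem_stabSubmonoid hψ.ne_zero (hmem P (Set.mem_insert_of_mem s hP)) hs,
      ← mulVec_mulVec, hT P hP]

theorem eq_innerC_smul_add_mulVec (hψ : IsStabState ψ)
    (hgen : Submonoid.closure (insert s T) = stabSubmonoid ψ) (hZ : Z.IsHermitian)
    (hanti : Z * s = -(s * Z)) (hφ : nrmSq φ = 1) (hfix : ∀ P ∈ insert Z T, P *ᵥ φ = φ) :
    ψ = innerC φ ψ • (φ + s *ᵥ φ) := by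
  obtain ⟨hZφ, hTφ⟩ := Set.forall_mem_insert.mp hfix
  obtain ⟨c, hc⟩ := hψ.exists_smul_eq_add_mulVec hgen hTφ
  rw [innerC_eq_dotProduct]
  exact eq_star_dotProduct_smul_add hc (star_dotProduct_self_eq_one_iff.mpr hφ)
    (star_dotProduct_eq_zero_of_isHermitian hZ hZφ (mulVec_mulVec_eq_neg_of_anticommute hanti hZφ))

theorem normSq_innerC_eq_half (hψ : IsStabState ψ)
    (hgen : Submonoid.closure (insert s T) = stabSubmonoid ψ) (hZ : Z.IsHermitian)
    (hanti : Z * s = -(s * Z)) (hφ : nrmSq φ = 1) (hfix : ∀ P ∈ insert Z T, P *ᵥ φ = φ) :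
    Complex.normSq (innerC φ ψ) = 1 / 2 := by
  have hs : s ∈ stabGroup ψ :=
    hgen.le (Submonoid.subset_closure (Set.mem_insert s T))
  have hweight : 2 * (star (innerC φ ψ) * innerC φ ψ) = 1 :=
    two_mul_star_dotProduct_mul_self hs.1.mem_unitaryGroup hs.2
      (star_dotProduct_self_eq_one_iff.mpr hψ.1)
      (hψ.eq_innerC_smul_add_mulVec hgen hZ hanti hφ hfix)
  rw [← starRingEnd_apply, ← Complex.normSq_eq_conj_mul_self] at hweight
  rw [eq_div_iff two_ne_zero, mul_comm]
  exact_mod_cast hweight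

theorem two_mul_innerC_smul (hψ : IsStabState ψ)
    (hgen : Submonoid.closure (insert s T) = stabSubmonoid ψ) (hZ : Z.IsHermitian)
    (hanti : Z * s = -(s * Z)) (hφ : nrmSq φ = 1) (hfix : ∀ P ∈ insert Z T, P *ᵥ φ = φ) :
    (2 * innerC φ ψ) • φ = ψ + Z *ᵥ ψ := by
  have hZφ : Z *ᵥ φ = φ := hfix Z (Set.mem_insert Z T)
  exact two_mul_star_dotProduct_smul hZφ (mulVec_mulVec_eq_neg_of_anticommute hanti hZφ)
    (hψ.eq_innerC_smul_add_mulVec hgen hZ hanti hφ hfix)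

end IsStabState

end StabilizerState

theorem equal_weight_stabilizer_superposition_general {n : ℕ} {ψ : QVec n} (hψ : IsStabState ψ)
    {s Z : QMat n} {T : Set (QMat n)}
    (hgen : Submonoid.closure (insert s T) = stabSubmonoid ψ) (hZ : Z.IsHermitian)
    (hanti : Z * s = -(s * Z)) {ψp ψm : QVec n} (hψp : nrmSq ψp = 1) (hψm : nrmSq ψm = 1)
    (hfixp : ∀ P ∈ insert Z T, P *ᵥ ψp = ψp) (hfixm : ∀ P ∈ insert (-Z) T, P *ᵥ ψm = ψm) :
    Complex.normSq (innerC ψp ψ) = 1 / 2 ∧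
    Complex.normSq (innerC ψm ψ) = 1 / 2 ∧
    ψ = innerC ψp ψ • ψp + innerC ψm ψ • ψm := by
  have hanti_neg : -Z * s = -(s * -Z) := by rw [neg_mul, hanti, mul_neg]
  refine ⟨hψ.normSq_innerC_eq_half hgen hZ hanti hψp hfixp,
    hψ.normSq_innerC_eq_half hgen hZ.neg hanti_neg hψm hfixm, ?_⟩
  have hplus : (2 * innerC ψp ψ) • ψp = ψ + Z *ᵥ ψ :=
    hψ.two_mul_innerC_smul hgen hZ hanti hψp hfixp
  have hminus : (2 * innerC ψm ψ) • ψm = ψ - Z *ᵥ ψ := by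
    rw [hψ.two_mul_innerC_smul hgen hZ.neg hanti_neg hψm hfixm, neg_mulVec, sub_eq_add_neg]
  linear_combination (norm := module) (-1 / 2 : ℂ) • (hplus + hminus)

/-- **Equal-weight stabilizer decomposition** (App. B 1): if `ψ` is a stabilizer
state with independent generating set `s_1 = g 0, g_2, …, g_n` such that `Z_1`
anticommutes with `s_1` and commutes with each `g_i` (`i ≥ 2`), and `ψ_±` are
unit vectors stabilized by the groups generated by `{±Z_1, g_2, …, g_n}`
respectively, then `|⟨ψ_+, ψ⟩|² = |⟨ψ_−, ψ⟩|² = 1/2` and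
`ψ = ⟨ψ_+, ψ⟩·ψ_+ + ⟨ψ_−, ψ⟩·ψ_−`. -/
theorem equal_weight_stabilizer_superposition {n : ℕ} [NeZero n]
    (ψ : QVec n) (hψ : IsStabState ψ)
    (g : Fin n → QMat n) (hg : IsIndepGenSet ψ g)
    (hanti : opAt (0 : Fin n) σZ * g 0 = -(g 0 * opAt (0 : Fin n) σZ))
    (hcomm : ∀ i : Fin n, i ≠ 0 →
      opAt (0 : Fin n) σZ * g i = g i * opAt (0 : Fin n) σZ)
    (ψp ψm : QVec n) (hψp : nrmSq ψp = 1) (hψm : nrmSq ψm = 1)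
    (hstabp : ∀ P ∈ Submonoid.closure
        (insert (opAt (0 : Fin n) σZ) {Q : QMat n | ∃ i : Fin n, i ≠ 0 ∧ Q = g i}),
      P.mulVec ψp = ψp)
    (hstabm : ∀ P ∈ Submonoid.closure
        (insert (-(opAt (0 : Fin n) σZ)) {Q : QMat n | ∃ i : Fin n, i ≠ 0 ∧ Q = g i}),
      P.mulVec ψm = ψm) :
    Complex.normSq (innerC ψp ψ) = 1 / 2 ∧
    Complex.normSq (innerC ψm ψ) = 1 / 2 ∧
    ψ = innerC ψp ψ • ψp + innerC ψm ψ • ψm := by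
  have hgen := hg.closure_range
  rw [range_eq_insert_setOf_ne g 0] at hgen
  have hZ : (opAt (0 : Fin n) σZ).IsHermitian :=
    isHermitian_opAt 0 (IsPauliFactor.isHermitian (.inr (.inr (.inr rfl))))
  exact equal_weight_stabilizer_superposition_general hψ hgen hZ hanti hψp hψm
    (fun P hP => hstabp P (Submonoid.subset_closure hP))
    (fun P hP => hstabm P (Submonoid.subset_closure hP))

end PaperFormal
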